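/- Consider finitely many demand scenarios, each consisting of an active set A with |A| ≤ 2, a demand map d on A, a chosen leader group U for (A, d), and a nonnegative weight w(A, d). Then the weighted average D-MCCS rate equals the weighted average lower-bound rate as functions of the placement: R̄_MCCS(q) = Σ_{(A,d)} w(A,d) · R_MCCS(d; q) = Σ_{(A,d)} w(A,d) · R_lb(D; q) = R̄_lb(q) for every q ∈ [0,1]^N. Consequently, for any cache size M ≥ 0, the infimum of R̄_MCCS over the feasible set {q ∈ [0,1]^N : Σ_{n=1}^N q_n F_n ≤ M} equals the infimum of R̄_lb over the same set. -/

import Mathlib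

/-!
The two rates already agree scenario by scenario, and the equality of averages and of infima
follows termwise. With at most two users there is little to optimise: for `|A| ≤ 1`, or for
two users with the same demand, both rates are explicit single-file expressions. For two users
requesting distinct files `x ≠ y` everyone is a leader, and both rates equal
`(1 - q x)² F x + (1 - q y)² F y + max (q x (1 - q x) F x) (q y (1 - q y) F y)`: in the lower
bound, `C(1, 1) = 1` and `C(0, 1) = 0` let only the first file of the ordering contribute at
`s = 1`, so maximising over orderings is the same as the maximum over the group `{a, b}`
(`R_MCCS_pair`, `R_lb_pair`). These are combined in `R_MCCS_eq_R_lb`.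
-/

open Finset

/-- Maximum of a real-valued function over a finite set (`0` if the set is empty). -/
noncomputable def maxOver {α : Type*} (S : Finset α) (f : α → ℝ) : ℝ :=
  if h : S.Nonempty then S.sup' h f else 0

/-- The D-MCCS delivery rate: the sum, over nonempty subsets `S ⊆ A` with
`S ∩ U ≠ ∅` (the non-redundant groups), of
`max_{k ∈ S} q_{d_k}^{|S|−1} (1 − q_{d_k})^{|A|−|S|+1} F_{d_k}`. -/
noncomputable def R_MCCS {α : Type*} [DecidableEq α] {N : ℕ} (A U : Finset α)
    (d : α → Fin N) (q F : Fin N → ℝ) : ℝ :=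
  ∑ S ∈ A.powerset.filter (fun S => (S ∩ U).Nonempty),
    maxOver S (fun k =>
      q (d k) ^ (S.card - 1) * (1 - q (d k)) ^ (A.card - S.card + 1) * F (d k))

/-- The lower-bound rate: the maximum over bijections `π : {1,…,|D|} → D` of
`Σ_{s=0}^{|A|−1} Σ_{i=1}^{|D|} C(|A|−i, s) q_{π(i)}^s (1 − q_{π(i)})^{|A|−s} F_{π(i)}`,
where `Acard = |A|`. -/
noncomputable def R_lb {N : ℕ} (Acard : ℕ) (D : Finset (Fin N))
    (q F : Fin N → ℝ) : ℝ :=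
  ⨆ π : Fin D.card ≃ {x : Fin N // x ∈ D},
    ∑ s ∈ Finset.range Acard, ∑ i : Fin D.card,
      ((Acard - (i.1 + 1)).choose s : ℝ) * q (π i).1 ^ s *
        (1 - q (π i).1) ^ (Acard - s) * F (π i).1

/-- `U` is a leader group for active set `A` with demand map `d`: `U ⊆ A`, the demand
map is injective on `U`, and the users in `U` request exactly the distinct files
requested by the users in `A`. -/
def IsLeaderGroup {α : Type*} [DecidableEq α] {N : ℕ} (A U : Finset α)
    (d : α → Fin N) : Prop :=
  U ⊆ A ∧ Set.InjOn d ↑U ∧ U.image d = A.image d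

/-- The supremum defining `R_lb`, reindexed by `Fin n` when `n = |D|`. -/
lemma R_lb_eq_of_card {N : ℕ} (m n : ℕ) (D : Finset (Fin N)) (h : D.card = n)
    (q F : Fin N → ℝ) :
    R_lb m D q F = ⨆ π : Fin n ≃ {x : Fin N // x ∈ D},
      ∑ s ∈ Finset.range m, ∑ i : Fin n,
        ((m - (i.1 + 1)).choose s : ℝ) * q (π i).1 ^ s *
          (1 - q (π i).1) ^ (m - s) * F (π i).1 := by
  subst h
  rfl

lemma R_lb_singleton {N : ℕ} (m : ℕ) (x : Fin N) (q F : Fin N → ℝ) :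
    R_lb m {x} q F = ∑ s ∈ Finset.range m,
      ((m - 1).choose s : ℝ) * q x ^ s * (1 - q x) ^ (m - s) * F x := by
  rw [R_lb_eq_of_card m 1 {x} (card_singleton x)]
  have hval : ∀ (π : Fin 1 ≃ {y : Fin N // y ∈ ({x} : Finset (Fin N))}) i, (π i).1 = x :=
    fun π i => mem_singleton.1 (π i).2
  have : Nonempty (Fin 1 ≃ {y : Fin N // y ∈ ({x} : Finset (Fin N))}) :=
    ⟨(Finset.equivFinOfCardEq (card_singleton x)).symm⟩
  simp only [hval, Fin.sum_univ_one]
  simp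

/-- For two users with distinct demands the order `π` only affects which file contributes
the `s = 1` term, so the maximum over `π` is a maximum of two numbers. -/
lemma R_lb_pair {N : ℕ} {x y : Fin N} (hxy : x ≠ y) (q F : Fin N → ℝ) :
    R_lb 2 {x, y} q F = (1 - q x) ^ 2 * F x + (1 - q y) ^ 2 * F y +
      max (q x * (1 - q x) * F x) (q y * (1 - q y) * F y) := by
  have hc : ({x, y} : Finset (Fin N)).card = 2 := card_pair hxy
  rw [R_lb_eq_of_card 2 2 _ hc]
  set T : Fin N → ℝ := fun z => q z * (1 - q z) * F z with hT
  have key : ∀ π : Fin 2 ≃ {z : Fin N // z ∈ ({x, y} : Finset (Fin N))},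
      ∑ s ∈ Finset.range 2, ∑ i : Fin 2,
        ((2 - (i.1 + 1)).choose s : ℝ) * q (π i).1 ^ s *
          (1 - q (π i).1) ^ (2 - s) * F (π i).1 =
      (1 - q x) ^ 2 * F x + (1 - q y) ^ 2 * F y + T (π 0).1 := by
    intro π
    have h0 := (π 0).2
    have h1 := (π 1).2
    have hne : (π 0).1 ≠ (π 1).1 := fun h => by
      simpa using π.injective (Subtype.ext h)
    simp only [mem_insert, mem_singleton] at h0 h1
    simp only [Finset.sum_range_succ, Finset.sum_range_zero, Fin.sum_univ_two, hT]
    rcases h0 with h0 | h0 <;> rcases h1 with h1 | h1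
    · exact absurd (h0.trans h1.symm) hne
    · rw [h0, h1]; norm_num
    · rw [h0, h1]; norm_num; ring
    · exact absurd (h0.trans h1.symm) hne
  simp only [key]
  let e := (Finset.equivFinOfCardEq hc).symm
  have : Nonempty (Fin 2 ≃ {z : Fin N // z ∈ ({x, y} : Finset (Fin N))}) := ⟨e⟩
  have hex : ∀ z ∈ ({x, y} : Finset (Fin N)),
      ∃ π : Fin 2 ≃ {z : Fin N // z ∈ ({x, y} : Finset (Fin N))}, (π 0).1 = z :=
    fun z hz => ⟨(Equiv.swap 0 (e.symm ⟨z, hz⟩)).trans e, by simp⟩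
  have hbdd := Set.finite_range (fun π : Fin 2 ≃ {z : Fin N // z ∈ ({x, y} : Finset (Fin N))} =>
    (1 - q x) ^ 2 * F x + (1 - q y) ^ 2 * F y + T (π 0).1) |>.bddAbove
  apply le_antisymm
  · refine ciSup_le fun π => ?_
    gcongr
    have h0 := (π 0).2
    simp only [mem_insert, mem_singleton] at h0
    rcases h0 with h0 | h0 <;> rw [h0]
    · exact le_max_left _ _
    · exact le_max_right _ _
  · obtain ⟨πx, hx⟩ := hex x (by simp)
    obtain ⟨πy, hy⟩ := hex y (by simp)
    have h1 := le_ciSup hbdd πx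
    have h2 := le_ciSup hbdd πy
    simp only [hx, hy] at h1 h2
    rcases max_cases (q x * (1 - q x) * F x) (q y * (1 - q y) * F y) with h | h <;> rw [h.1]
    · exact h1
    · exact h2

lemma maxOver_singleton {α : Type*} (a : α) (f : α → ℝ) : maxOver {a} f = f a := by
  simp [maxOver]

lemma maxOver_pair {α : Type*} [DecidableEq α] (a b : α) (f : α → ℝ) :
    maxOver {a, b} f = max (f a) (f b) := by
  rw [maxOver, dif_pos (by simp), Finset.sup'_insert (by simp)]
  simp

/-- With two users `a ≠ b` every nonempty group is `{a}`, `{b}` or `{a, b}`; the last one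
always meets the leader group when the latter is nonempty. -/
lemma R_MCCS_pair {α : Type*} [DecidableEq α] {N : ℕ} {a b : α} (hab : a ≠ b)
    (U : Finset α) (hne : a ∈ U ∨ b ∈ U) (d : α → Fin N) (q F : Fin N → ℝ) :
    R_MCCS {a, b} U d q F =
      (if a ∈ U then (1 - q (d a)) ^ 2 * F (d a) else 0) +
      (if b ∈ U then (1 - q (d b)) ^ 2 * F (d b) else 0) +
      max (q (d a) * (1 - q (d a)) * F (d a)) (q (d b) * (1 - q (d b)) * F (d b)) := by
  have hsing : ∀ c : α, ({c} ∩ U).Nonempty ↔ c ∈ U := fun c => by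
    by_cases h : c ∈ U <;> simp [h]
  have hpair : (({a, b} : Finset α) ∩ U).Nonempty := by
    rcases hne with h | h
    · exact ⟨a, by simp [h]⟩
    · exact ⟨b, by simp [h]⟩
  have hpow : ({a, b} : Finset α).powerset = {∅, {a}, {b}, {a, b}} := by
    ext S
    simp only [mem_powerset, mem_insert, mem_singleton, ← Finset.coe_subset, Finset.coe_pair,
      Set.subset_pair_iff_eq]
    simp only [← Finset.coe_insert, ← Finset.coe_singleton, ← Finset.coe_empty, Finset.coe_inj]
  have h1 : ({a} : Finset α) ≠ {b} := by simpa using hab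
  have h2 : ({a} : Finset α) ≠ {a, b} := fun h => by
    simpa [card_pair hab] using congrArg Finset.card h
  have h3 : ({b} : Finset α) ≠ {a, b} := fun h => by
    simpa [card_pair hab] using congrArg Finset.card h
  have h4 : (∅ : Finset α) ∉ ({{a}, {b}, {a, b}} : Finset (Finset α)) := by
    have h5 : ({a, b} : Finset α) ≠ ∅ := Finset.insert_ne_empty _ _
    simp [h5.symm]
  rw [R_MCCS, Finset.sum_filter, hpow, Finset.sum_insert h4,
    Finset.sum_insert (by simp [h1, h2]), Finset.sum_insert (by simp [h3]),
    Finset.sum_singleton, if_pos hpair, maxOver_pair, maxOver_singleton, maxOver_singleton]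
  simp only [hsing, card_pair hab, card_singleton]
  simp [add_assoc]

lemma R_MCCS_eq_R_lb {α : Type*} [DecidableEq α] {N : ℕ} (A U : Finset α)
    (d : α → Fin N) (q F : Fin N → ℝ) (hA : A.card ≤ 2) (hU : IsLeaderGroup A U d) :
    R_MCCS A U d q F = R_lb A.card (A.image d) q F := by
  obtain ⟨hsub, hinj, himg⟩ := hU
  have hcases : A.card = 0 ∨ A.card = 1 ∨ A.card = 2 := by omega
  rcases hcases with h | h | h
  · obtain rfl := Finset.card_eq_zero.1 h
    obtain rfl := Finset.subset_empty.1 hsub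
    simp [R_MCCS, R_lb]
  · obtain ⟨a, rfl⟩ := Finset.card_eq_one.1 h
    have hUa : U = {a} := by
      rcases Finset.subset_singleton_iff.1 hsub with rfl | h
      · simp at himg
      · exact h
    subst hUa
    have hf : ({a} : Finset α).powerset.filter (fun S => (S ∩ {a}).Nonempty) = {{a}} := by
      ext S
      simp only [mem_filter, mem_powerset, Finset.subset_singleton_iff, mem_singleton]
      constructor
      · rintro ⟨rfl | rfl, h⟩
        · simp at h
        · rfl
      · rintro rfl
        simp
    rw [R_MCCS, hf, Finset.sum_singleton, maxOver_singleton, image_singleton, R_lb_singleton]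
    simp
  · obtain ⟨a, b, hab, rfl⟩ := Finset.card_eq_two.1 h
    have ha : d a ∈ U.image d := by rw [himg]; simp
    have hb : d b ∈ U.image d := by rw [himg]; simp
    obtain ⟨a', ha', hda⟩ := mem_image.1 ha
    obtain ⟨b', hb', hdb⟩ := mem_image.1 hb
    have hab' : a' = a ∨ a' = b := by simpa using hsub ha'
    have hba' : b' = a ∨ b' = b := by simpa using hsub hb'
    have hne : a ∈ U ∨ b ∈ U := by
      rcases hab' with rfl | rfl <;> simp [ha']
    rw [R_MCCS_pair hab U hne, card_pair hab, image_insert, image_singleton]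
    by_cases hd : d a = d b
    · -- Equal demands: injectivity leaves exactly one of the two users in `U`.
      have hnot : ¬ (a ∈ U ∧ b ∈ U) := fun hh => hab (hinj hh.1 hh.2 hd)
      rw [hd, pair_eq_singleton, R_lb_singleton]
      simp only [Finset.sum_range_succ, Finset.sum_range_zero, max_self]
      by_cases h1 : a ∈ U <;> by_cases h2 : b ∈ U
      · exact absurd ⟨h1, h2⟩ hnot
      · simp [h1, h2]
      · simp [h1, h2]
      · simp [h1, h2] at hne
    · -- Distinct demands: both users are leaders.
      have h1 : a ∈ U := by
        rcases hab' with rfl | rfl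
        · exact ha'
        · exact absurd hda.symm hd
      have h2 : b ∈ U := by
        rcases hba' with rfl | rfl
        · exact absurd hdb hd
        · exact hb'
      rw [R_lb_pair hd, if_pos h1, if_pos h2]

/-- Finitely many demand scenarios, each with active set `A i` of size at most `2`,
demand map `d i`, leader group `U i`, and nonnegative weight `w i`: the weighted
average D-MCCS rate equals the weighted average lower-bound rate for every
placement `q ∈ [0,1]^N`; consequently, for any cache size `M ≥ 0` the infima of the
two average rates over the feasible set
`{q ∈ [0,1]^N : Σ_n q_n F_n ≤ M}` coincide. -/
theorem avg_rate_eq_avg_lb_of_card_le_two {α ι : Type*} [DecidableEq α] [Fintype ι]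
    {N : ℕ} (A U : ι → Finset α) (d : ι → α → Fin N) (w : ι → ℝ)
    (F : Fin N → ℝ) (M : ℝ)
    (hA : ∀ i, (A i).card ≤ 2) (hU : ∀ i, IsLeaderGroup (A i) (U i) (d i))
    (hw : ∀ i, 0 ≤ w i) (hF : ∀ n, 0 ≤ F n) (hM : 0 ≤ M) :
    (∀ q : Fin N → ℝ, (∀ n, q n ∈ Set.Icc (0 : ℝ) 1) →
      ∑ i, w i * R_MCCS (A i) (U i) (d i) q F
        = ∑ i, w i * R_lb (A i).card ((A i).image (d i)) q F) ∧
    sInf ((fun q => ∑ i, w i * R_MCCS (A i) (U i) (d i) q F) ''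
        {q : Fin N → ℝ | (∀ n, q n ∈ Set.Icc (0 : ℝ) 1) ∧ ∑ n, q n * F n ≤ M})
      = sInf ((fun q => ∑ i, w i * R_lb (A i).card ((A i).image (d i)) q F) ''
        {q : Fin N → ℝ | (∀ n, q n ∈ Set.Icc (0 : ℝ) 1) ∧ ∑ n, q n * F n ≤ M}) := by
  have heq : ∀ q : Fin N → ℝ, ∑ i, w i * R_MCCS (A i) (U i) (d i) q F
      = ∑ i, w i * R_lb (A i).card ((A i).image (d i)) q F := fun q =>
    Finset.sum_congr rfl fun i _ => by rw [R_MCCS_eq_R_lb _ _ _ q F (hA i) (hU i)]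
  exact ⟨fun q _ => heq q, by simp only [heq]⟩
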